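/- Let 𝒢_imp = (𝒢, ∼) be an imperfect-information arena defining a game with opacity condition with secret set S ⊆ V₁ marked by the atomic proposition p_S. A strategy σ for Alice (Player 2) is winning (i.e., every π ∈ out(σ) is winning for Alice) if and only if σ is (≈, G ¬ R p_S)-fully-uniform. -/

import Mathlib

namespace UniformStrategies

variable {V AP : Type}

/-- A two-player turn-based arena. -/
structure Arena (V : Type) (AP : Type) where
  V1 : Set V
  V2 : Set V
  union_eq : V1 ∪ V2 = Set.univ
  inter_empty : V1 ∩ V2 = ∅
  E : V → V → Prop
  edges_ok : ∀ v w, E v w → (v ∈ V1 ∧ w ∈ V2) ∨ (v ∈ V2 ∧ w ∈ V1)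
  v0 : V
  val : V → Set AP
  val_finite : ∀ v, (val v).Finite

namespace Arena

/-- A finite play: a nonempty finite path starting at `v0`. -/
def IsFinPlay (G : Arena V AP) (ρ : List V) : Prop :=
  ρ ≠ [] ∧ ρ.head? = some G.v0 ∧ ρ.Chain' G.E

/-- An infinite play: an infinite path starting at `v0`. -/
def IsInfPlay (G : Arena V AP) (π : ℕ → V) : Prop :=
  π 0 = G.v0 ∧ ∀ i, G.E (π i) (π (i + 1))

/-- The set of all infinite plays `Plays_ω`. -/
def PlaysInf (G : Arena V AP) : Set (ℕ → V) := {π | G.IsInfPlay π}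

end Arena

/-- The prefix `π[0,i]` of an infinite play. -/
def pref (π : ℕ → V) (i : ℕ) : List V := (List.range (i + 1)).map π

/-- RLTL formulas: `φ ::= p | ¬φ | φ∧ψ | ○φ | φ U ψ | R φ`. -/
inductive RLTL (AP : Type) : Type
  | atom : AP → RLTL AP
  | neg : RLTL AP → RLTL AP
  | and : RLTL AP → RLTL AP → RLTL AP
  | next : RLTL AP → RLTL AP
  | untl : RLTL AP → RLTL AP → RLTL AP
  | R : RLTL AP → RLTL AP

namespace RLTL

def or (φ ψ : RLTL AP) : RLTL AP := .neg (.and (.neg φ) (.neg ψ))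

def imp (φ ψ : RLTL AP) : RLTL AP := RLTL.or (.neg φ) ψ

/-- A tautology (built from the atom `p`). -/
def top (p : AP) : RLTL AP := RLTL.or (.atom p) (.neg (.atom p))

def bot (p : AP) : RLTL AP := .neg (RLTL.top p)

/-- The derived `always` operator `G φ := ¬(⊤ U ¬φ)`. -/
def always (p : AP) (φ : RLTL AP) : RLTL AP := .neg (.untl (RLTL.top p) (.neg φ))

/-- Finite disjunction. -/
def bigOr (p : AP) (l : List (RLTL AP)) : RLTL AP := l.foldr RLTL.or (RLTL.bot p)

/-- A formula has no occurrence of the modality `R` (R-depth 0, pure LTL). -/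
def RFree : RLTL AP → Prop
  | .atom _ => True
  | .neg φ => RFree φ
  | .and φ ψ => RFree φ ∧ RFree ψ
  | .next φ => RFree φ
  | .untl φ ψ => RFree φ ∧ RFree ψ
  | .R _ => False

end RLTL

/-- Satisfaction `U, π, i ⊨ φ` of an RLTL formula over the arena `G`, with
binary relation `rel` between finite plays, in the universe `U`. -/
def sat (G : Arena V AP) (rel : List V → List V → Prop) (U : Set (ℕ → V)) :
    RLTL AP → (ℕ → V) → ℕ → Prop
  | .atom p, π, i => p ∈ G.val (π i)
  | .neg φ, π, i => ¬ sat G rel U φ π i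
  | .and φ ψ, π, i => sat G rel U φ π i ∧ sat G rel U ψ π i
  | .next φ, π, i => sat G rel U φ π (i + 1)
  | .untl φ ψ, π, i =>
      ∃ j, i ≤ j ∧ sat G rel U ψ π j ∧ ∀ k, i ≤ k → k < j → sat G rel U φ π k
  | .R φ, π, i => ∀ π' ∈ U, ∀ j : ℕ, rel (pref π i) (pref π' j) → sat G rel U φ π' j

/-- A strategy for Player 1: a partial function from finite plays ending in `V1`
to next positions along an edge. -/
structure Strategy1 (G : Arena V AP) where
  act : List V → Option V
  act_ok : ∀ ρ v, act ρ = some v →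
    G.IsFinPlay ρ ∧ ∃ w, ρ.getLast? = some w ∧ w ∈ G.V1 ∧ G.E w v

/-- The outcome of a strategy: the set of infinite plays induced by it. -/
def Strategy1.out {G : Arena V AP} (σ : Strategy1 G) : Set (ℕ → V) :=
  {π | G.IsInfPlay π ∧ ∀ i, π i ∈ G.V1 → σ.act (pref π i) = some (π (i + 1))}

/-- `(rel,φ)`-strictly-uniform strategy. -/
def StrictlyUniform {G : Arena V AP} (rel : List V → List V → Prop)
    (φ : RLTL AP) (σ : Strategy1 G) : Prop :=
  ∀ π ∈ σ.out, sat G rel σ.out φ π 0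

/-- `(rel,φ)`-fully-uniform strategy. -/
def FullyUniform {G : Arena V AP} (rel : List V → List V → Prop)
    (φ : RLTL AP) (σ : Strategy1 G) : Prop :=
  ∀ π ∈ σ.out, sat G rel G.PlaysInf φ π 0

/-- Positions of an imperfect-information arena: Player 1 positions `v` and
Player 2 positions `(v, a)` for an action `a`. -/
abbrev GPos (Q Act : Type) := Q ⊕ Q × Act

/-- An imperfect-information arena `(𝒢, ∼)`: Player 1 positions are of the form
`v`, Player 2 positions of the form `(v,a)`, `v E (v',a)` implies `v = v'`,
`v₀ ∈ V₁`, and `∼` is an equivalence relation on Player 1 positions. -/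
structure ImpArena (Q Act AP : Type) where
  G : Arena (GPos Q Act) AP
  V1_def : G.V1 = Set.range Sum.inl
  V2_def : G.V2 = Set.range Sum.inr
  v0_P1 : ∃ q : Q, G.v0 = Sum.inl q
  edge_act : ∀ (v v' : Q) (a : Act), G.E (Sum.inl v) (Sum.inr (v', a)) → v = v'
  sim : Q → Q → Prop
  sim_equiv : Equivalence sim

variable {Q Act : Type}

/-- Componentwise relation on positions: Player 1 positions are related iff they
are `∼`-equivalent; Player 2 positions are related iff they carry the same action. -/
def posSim (M : ImpArena Q Act AP) : GPos Q Act → GPos Q Act → Prop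
  | Sum.inl v, Sum.inl v' => M.sim v v'
  | Sum.inr (_, a), Sum.inr (_, a') => a = a'
  | _, _ => False

/-- The extension `≈` of `∼` to finite plays: plays of the same length, related
componentwise. -/
def playEquiv (M : ImpArena Q Act AP) (ρ ρ' : List (GPos Q Act)) : Prop :=
  List.Forall₂ (posSim M) ρ ρ'

/-- Bob's information set after a finite play `ρ`: the set of last positions of
finite plays `≈`-equivalent to `ρ`. -/
def infoSet {Q Act : Type} (M : ImpArena Q Act AP) (ρ : List (GPos Q Act)) :
    Set (GPos Q Act) :=
  {v | ∃ ρ', M.G.IsFinPlay ρ' ∧ playEquiv M ρ ρ' ∧ ρ'.getLast? = some v}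

/-- A strategy for Player 2 (Alice): a partial function from finite plays ending in
`V2` to next positions along an edge. -/
structure Strategy2 (G : Arena V AP) where
  act : List V → Option V
  act_ok : ∀ ρ v, act ρ = some v →
    G.IsFinPlay ρ ∧ ∃ w, ρ.getLast? = some w ∧ w ∈ G.V2 ∧ G.E w v

/-- The outcome of a Player 2 strategy. -/
def Strategy2.out {G : Arena V AP} (σ : Strategy2 G) : Set (ℕ → V) :=
  {π | G.IsInfPlay π ∧ ∀ i, π i ∈ G.V2 → σ.act (pref π i) = some (π (i + 1))}

/-- `(rel,φ)`-fully-uniform strategy for Player 2. -/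
def FullyUniform2 {G : Arena V AP} (rel : List V → List V → Prop)
    (φ : RLTL AP) (σ : Strategy2 G) : Prop :=
  ∀ π ∈ σ.out, sat G rel G.PlaysInf φ π 0

/-- An infinite play is winning for Alice if no finite prefix `ρ` with
`last(ρ) ∈ V₁` satisfies `I(ρ) ⊆ S`. -/
def WinningForAlice {Q Act : Type} (M : ImpArena Q Act AP) (S : Set Q)
    (π : ℕ → GPos Q Act) : Prop :=
  ¬ ∃ i : ℕ, π i ∈ M.G.V1 ∧ infoSet M (pref π i) ⊆ Sum.inl '' S

/-!
`R p` quantifies over prefixes of infinite plays; as every finite play is such a prefix, `R p_S`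
holds at `π[0,i]` iff the information set of `π[0,i]` is contained in `S`. The formula does not
require `π[0,i]` to end in `V₁`, but this is automatic: `π i` belongs to its own information set,
and `S ⊆ V₁`.
-/

theorem getLast?_pref (π : ℕ → V) (i : ℕ) : (pref π i).getLast? = some (π i) := by
  simp [pref, List.range_succ]

theorem Arena.IsInfPlay.isFinPlay_pref {G : Arena V AP} {π : ℕ → V} (hπ : G.IsInfPlay π) (i : ℕ) :
    G.IsFinPlay (pref π i) := by
  refine ⟨by simp [pref], by simp [pref, List.range_succ_eq_map, hπ.1], ?_⟩
  refine List.isChain_iff_getElem.2 fun k _ => ?_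
  simpa [pref] using hπ.2 k

section Satisfaction

variable {G : Arena V AP} {rel : List V → List V → Prop} {U : Set (ℕ → V)}

theorem sat_top (p : AP) (π : ℕ → V) (i : ℕ) : sat G rel U (RLTL.top p) π i := by
  simp only [RLTL.top, RLTL.or, sat]
  tauto

theorem sat_always_iff (p : AP) (φ : RLTL AP) (π : ℕ → V) (i : ℕ) :
    sat G rel U (RLTL.always p φ) π i ↔ ∀ j, i ≤ j → sat G rel U φ π j := by
  simp only [RLTL.always, sat, sat_top, implies_true, and_true, not_exists, not_and, not_not]

theorem sat_R_atom_iff_forall_isFinPlay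
    (hext : ∀ ρ, G.IsFinPlay ρ → ∃ π, G.IsInfPlay π ∧ pref π (ρ.length - 1) = ρ)
    (p : AP) (π : ℕ → V) (i : ℕ) :
    sat G rel G.PlaysInf (.R (.atom p)) π i ↔
      ∀ ρ v, G.IsFinPlay ρ → rel (pref π i) ρ → ρ.getLast? = some v → p ∈ G.val v := by
  constructor
  · intro h ρ v hρ hrel hlast
    obtain ⟨π', hπ', hpref⟩ := hext ρ hρ
    have hv : π' (ρ.length - 1) = v := by
      rwa [← hpref, getLast?_pref, Option.some.injEq] at hlast
    exact hv ▸ h π' hπ' _ (hpref.symm ▸ hrel)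
  · intro h π' hπ' j hrel
    exact h _ _ (hπ'.isFinPlay_pref j) hrel (getLast?_pref π' j)

end Satisfaction

section InformationSets

variable (M : ImpArena Q Act AP)

theorem posSim_refl : ∀ v, posSim M v v
  | Sum.inl v => M.sim_equiv.refl v
  | Sum.inr _ => rfl

theorem playEquiv_refl (ρ : List (GPos Q Act)) : playEquiv M ρ ρ :=
  List.forall₂_same.2 fun v _ => posSim_refl M v

variable {M}

theorem mem_infoSet_pref {π : ℕ → GPos Q Act} (hπ : M.G.IsInfPlay π) (i : ℕ) :
    π i ∈ infoSet M (pref π i) :=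
  ⟨pref π i, hπ.isFinPlay_pref i, playEquiv_refl M _, getLast?_pref π i⟩

theorem mem_V1_of_infoSet_pref_subset {S : Set Q} {π : ℕ → GPos Q Act} (hπ : M.G.IsInfPlay π)
    {i : ℕ} (h : infoSet M (pref π i) ⊆ Sum.inl '' S) : π i ∈ M.G.V1 :=
  M.V1_def ▸ Set.image_subset_range _ _ (h (mem_infoSet_pref hπ i))

theorem winningForAlice_iff_forall_not_infoSet_subset {S : Set Q} {π : ℕ → GPos Q Act}
    (hπ : M.G.IsInfPlay π) :
    WinningForAlice M S π ↔ ∀ i, ¬ infoSet M (pref π i) ⊆ Sum.inl '' S := by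
  rw [WinningForAlice, not_exists]
  exact forall_congr' fun _ =>
    not_congr (and_iff_right_of_imp (mem_V1_of_infoSet_pref_subset hπ))

theorem sat_R_atom_iff_infoSet_subset
    (hext : ∀ ρ, M.G.IsFinPlay ρ → ∃ π, M.G.IsInfPlay π ∧ pref π (ρ.length - 1) = ρ)
    (p : AP) (π : ℕ → GPos Q Act) (i : ℕ) :
    sat M.G (playEquiv M) M.G.PlaysInf (.R (.atom p)) π i ↔
      infoSet M (pref π i) ⊆ {v | p ∈ M.G.val v} := by
  rw [sat_R_atom_iff_forall_isFinPlay hext]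
  constructor
  · rintro h v ⟨ρ, hρ, hequiv, hlast⟩
    exact h ρ v hρ hequiv hlast
  · intro h ρ v hρ hequiv hlast
    exact h ⟨ρ, hρ, hequiv, hlast⟩

theorem winningForAlice_iff_sat_always_not_R {S : Set Q} {pS : AP}
    (hval : ∀ v : GPos Q Act, pS ∈ M.G.val v ↔ v ∈ Sum.inl '' S)
    (hext : ∀ ρ, M.G.IsFinPlay ρ → ∃ π, M.G.IsInfPlay π ∧ pref π (ρ.length - 1) = ρ)
    {π : ℕ → GPos Q Act} (hπ : M.G.IsInfPlay π) :
    WinningForAlice M S π ↔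
      sat M.G (playEquiv M) M.G.PlaysInf (.always pS (.neg (.R (.atom pS)))) π 0 := by
  have hsecret : {v | pS ∈ M.G.val v} = Sum.inl '' S := Set.ext hval
  calc
    WinningForAlice M S π ↔ ∀ i, ¬ infoSet M (pref π i) ⊆ Sum.inl '' S :=
      winningForAlice_iff_forall_not_infoSet_subset hπ
    _ ↔ ∀ i, ¬ sat M.G (playEquiv M) M.G.PlaysInf (.R (.atom pS)) π i := by
      simp only [sat_R_atom_iff_infoSet_subset hext, hsecret]
    _ ↔ sat M.G (playEquiv M) M.G.PlaysInf (.always pS (.neg (.R (.atom pS)))) π 0 := by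
      simp only [sat_always_iff, Nat.zero_le, forall_const, sat]

end InformationSets

theorem winning_iff_fullyUniform_opacity_general
    (M : ImpArena Q Act AP) (S : Set Q) (pS : AP)
    (hval : ∀ v : GPos Q Act, pS ∈ M.G.val v ↔ v ∈ Sum.inl '' S)
    (hext : ∀ ρ, M.G.IsFinPlay ρ →
      ∃ π, M.G.IsInfPlay π ∧ pref π (ρ.length - 1) = ρ)
    (σ : Strategy2 M.G) :
    (∀ π ∈ σ.out, WinningForAlice M S π) ↔
      FullyUniform2 (playEquiv M)
        (RLTL.always pS (RLTL.neg (RLTL.R (.atom pS)))) σ :=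
  forall₂_congr fun _ hπ => winningForAlice_iff_sat_always_not_R hval hext hπ.1

/-- In a game with opacity condition with secret set `S ⊆ V₁`
marked by `p_S`, a strategy `σ` for Alice (Player 2) is winning iff `σ` is
`(≈, G ¬ R p_S)`-fully-uniform. -/
theorem winning_iff_fullyUniform_opacity
    {Q Act AP : Type} [Fintype Act] (M : ImpArena Q Act AP)
    (S : Set Q) (pS : AP)
    (hval : ∀ v : GPos Q Act, pS ∈ M.G.val v ↔ v ∈ Sum.inl '' S)
    (hext : ∀ ρ, M.G.IsFinPlay ρ →
      ∃ π, M.G.IsInfPlay π ∧ pref π (ρ.length - 1) = ρ)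
    (σ : Strategy2 M.G) :
    (∀ π ∈ σ.out, WinningForAlice M S π) ↔
      FullyUniform2 (playEquiv M)
        (RLTL.always pS (RLTL.neg (RLTL.R (.atom pS)))) σ :=
  winning_iff_fullyUniform_opacity_general M S pS hval hext σ

end UniformStrategies
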